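/- Correctness of Memo-la (Theorem 4): For every la-NFA A = (P, Q, q0, F, T), every input string w over Σ, and every position i ∈ {0, …, |w|}, the memoized algorithm returns the same result as the original backtracking algorithm: Match-(la,at)_{A,w}(q0, i) = Memo-la^{M0}_{A,w}(q0, i). -/

import Mathlib

namespace RegexMemo

/-! ## Generic runs, `φ`, `sub`, `sub*` -/

variable {α : Type}

/-- `φ_s(ℓ, n)`: the index of the result value of the call at index `ℓ`. -/
def phiAux (isRet : α → Bool) (s : List α) (ℓ n : ℕ) : Option ℕ :=
  match h : s[ℓ]? with
  | none => none
  | some e =>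
    if isRet e then
      if n ≤ 1 then some ℓ
      else phiAux isRet s (ℓ + 1) (n - 1)
    else phiAux isRet s (ℓ + 1) (n + 1)
termination_by s.length - ℓ
decreasing_by
  all_goals
    have hl : ℓ < s.length := by
      by_contra hc
      have : s[ℓ]? = none := List.getElem?_eq_none (by omega)
      simp [this] at h
    omega

/-- `φ_s(ℓ) = φ_s(ℓ, 0)`. -/
def phi (isRet : α → Bool) (s : List α) (ℓ : ℕ) : Option ℕ := phiAux isRet s ℓ 0

/-- `sub(s, ℓ)`: replace the memoization-table invocation at index `ℓ` (an element
`M(q,i)` together with its immediately following result) by `C(q,i)` followed by the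
subsequence `s[ℓ'+1] … s[φ_s(ℓ')]`, where `ℓ'` is the first index with `s[ℓ'] = C(q,i)`.
Here `m2c` maps a memoization element `M(q,i)` to the corresponding call element `C(q,i)`
(and everything else to `none`), and `isRet` recognizes result elements. -/
def subExpand [DecidableEq α] (m2c : α → Option α) (isRet : α → Bool)
    (s : List α) (ℓ : ℕ) : Option (List α) :=
  match s[ℓ]? with
  | some e =>
    match m2c e with
    | some c =>
      match s.findIdx? (· == c) with
      | some ℓ' =>
        match phi isRet s ℓ' with
        | some m =>
          some (s.take ℓ ++ [c] ++ ((s.drop (ℓ' + 1)).take (m - ℓ')) ++ s.drop (ℓ + 2))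
        | none => none
      | none => none
    | none => none
  | none => none

/-- `sub*`: repeatedly locate the first memoization element and expand it,
until no memoization element remains. `SubStar m2c isRet s t` means `sub*(s) = t`. -/
inductive SubStar [DecidableEq α] (m2c : α → Option α) (isRet : α → Bool) :
    List α → List α → Prop where
  | done {s : List α} : s.findIdx? (fun e => (m2c e).isSome) = none →
      SubStar m2c isRet s s
  | step {s s' t : List α} {ℓ : ℕ} :
      s.findIdx? (fun e => (m2c e).isSome) = some ℓ →
      subExpand m2c isRet s ℓ = some s' →
      SubStar m2c isRet s' t →
      SubStar m2c isRet s t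

/-- The number of (recursive) calls recorded in a run: the number of `C`/`M` elements. -/
def callCount (isCall : α → Bool) (s : List α) : ℕ := (s.filter isCall).length

variable {Sigma S : Type}

/-- Results of backtracking matching: `SuccessAt i'` or `Failure`. -/
inductive Result : Type where
  | successAt : ℕ → Result
  | failure : Result
deriving DecidableEq

/-! ## Plain NFAs -/

/-- Transitions of a plain NFA. -/
inductive Trans (Sigma S : Type) : Type where
  | eps : S → Trans Sigma S
  | branch : S → S → Trans Sigma S
  | char : Sigma → S → Trans Sigma S

/-- A (plain) NFA over the alphabet `Sigma` with (finite) state type `S`: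
an initial state, a set of accepting states, and a transition function
(whose value is only relevant on non-accepting states). -/
structure NFA (Sigma S : Type) where
  q0 : S
  F : Set S
  T : S → Trans Sigma S

/-- One ε-step: an `Eps` or `Branch` transition of a non-accepting state. -/
def NFA.epsStep (A : NFA Sigma S) (q q' : S) : Prop :=
  q ∉ A.F ∧ (A.T q = Trans.eps q' ∨ (∃ q'', A.T q = Trans.branch q' q'') ∨
    (∃ q'', A.T q = Trans.branch q'' q'))

/-- The NFA has no ε-loops. -/
def NFA.NoEpsLoops (A : NFA Sigma S) : Prop :=
  ∀ q : S, ¬ Relation.TransGen A.epsStep q q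

open Classical in
/-- The in-degree `#in(q)` of a state of a plain NFA. -/
noncomputable def NFA.inDeg [Fintype S] (A : NFA Sigma S) (q : S) : ℕ :=
  (Finset.univ.filter fun q' : S => q' ∉ A.F ∧ A.T q' = Trans.eps q).card +
  (Finset.univ.filter fun q' : S => q' ∉ A.F ∧ ∃ σ, A.T q' = Trans.char σ q).card +
  (Finset.univ.filter fun q' : S => q' ∉ A.F ∧ ∃ q'', A.T q' = Trans.branch q q'').card +
  (Finset.univ.filter fun q' : S => q' ∉ A.F ∧ ∃ q'', A.T q' = Trans.branch q'' q).card +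
  (if q = A.q0 then 1 else 0)

/-- The maximal in-degree `#in(A)` of a plain NFA. -/
noncomputable def NFA.inDegMax [Fintype S] (A : NFA Sigma S) : ℕ :=
  Finset.univ.sup fun q : S => A.inDeg q

/-- Elements of runs of `Match`/`Memo`: calls `C(q,i)`, memoization-table invocations
`M(q,i)`, and results `S(i')` and `F`. -/
inductive RunElem (S : Type) : Type where
  | call : S → ℕ → RunElem S
  | memo : S → ℕ → RunElem S
  | succ : ℕ → RunElem S
  | fail : RunElem S
deriving DecidableEq

/-- The run element recording the return of a result. -/
def Result.elem {S : Type} : Result → RunElem S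
  | .successAt i => .succ i
  | .failure => .fail

def RunElem.isRet : RunElem S → Bool
  | .succ _ => true
  | .fail => true
  | _ => false

def RunElem.isCall : RunElem S → Bool
  | .call _ _ => true
  | .memo _ _ => true
  | _ => false

/-- `M(q,i) ↦ C(q,i)`. -/
def memoToCall : RunElem S → Option (RunElem S)
  | .memo q i => some (.call q i)
  | _ => none

/-- Big-step semantics (together with the produced run) of the backtracking
matching algorithm `Match` for plain NFAs:
`MatchRun A w q i r s` means the call `Match_{A,w}(q, i)` terminates with
result `r` and produces the run `s`. -/
inductive MatchRun (A : NFA Sigma S) (w : List Sigma) :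
    S → ℕ → Result → List (RunElem S) → Prop where
  | accept {q : S} {i : ℕ} : q ∈ A.F →
      MatchRun A w q i (.successAt i) [.call q i, .succ i]
  | eps {q q' : S} {i : ℕ} {r : Result} {s : List (RunElem S)} :
      q ∉ A.F → A.T q = Trans.eps q' →
      MatchRun A w q' i r s →
      MatchRun A w q i r (.call q i :: s ++ [r.elem])
  | branchSucc {q q' q'' : S} {i i' : ℕ} {s : List (RunElem S)} :
      q ∉ A.F → A.T q = Trans.branch q' q'' →
      MatchRun A w q' i (.successAt i') s →
      MatchRun A w q i (.successAt i') (.call q i :: s ++ [RunElem.succ i'])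
  | branchFail {q q' q'' : S} {i : ℕ} {r : Result} {s s' : List (RunElem S)} :
      q ∉ A.F → A.T q = Trans.branch q' q'' →
      MatchRun A w q' i .failure s →
      MatchRun A w q'' i r s' →
      MatchRun A w q i r (.call q i :: s ++ s' ++ [r.elem])
  | charSucc {q q' : S} {σ : Sigma} {i : ℕ} {r : Result} {s : List (RunElem S)} :
      q ∉ A.F → A.T q = Trans.char σ q' →
      w[i]? = some σ →
      MatchRun A w q' (i + 1) r s →
      MatchRun A w q i r (.call q i :: s ++ [r.elem])
  | charFail {q q' : S} {σ : Sigma} {i : ℕ} :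
      q ∉ A.F → A.T q = Trans.char σ q' →
      w[i]? ≠ some σ →
      MatchRun A w q i .failure [.call q i, .fail]

/-- Record `M(q,i) := Failure` in the memoization table if the result is a failure. -/
def recFail [DecidableEq S] (M : S × ℕ → Bool) (q : S) (i : ℕ) : Result → (S × ℕ → Bool)
  | .failure => fun p => if p = (q, i) then true else M p
  | _ => M

/-- Big-step semantics (with resulting memoization table and produced run) of the
memoized backtracking matching algorithm `Memo` for plain NFAs:
`MemoRun A w q i M M' r s` means the call `Memo^M_{A,w}(q, i)` terminates with result
`r`, final memoization table `M'` (where `M p = true` means `Failure` is recorded at the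
key `p`), and produces the run `s`. -/
inductive MemoRun [DecidableEq S] (A : NFA Sigma S) (w : List Sigma) :
    S → ℕ → (S × ℕ → Bool) → (S × ℕ → Bool) → Result → List (RunElem S) → Prop where
  | memoHit {q : S} {i : ℕ} {M : S × ℕ → Bool} : M (q, i) = true →
      MemoRun A w q i M M .failure [.memo q i, .fail]
  | accept {q : S} {i : ℕ} {M : S × ℕ → Bool} : M (q, i) = false → q ∈ A.F →
      MemoRun A w q i M M (.successAt i) [.call q i, .succ i]
  | eps {q q' : S} {i : ℕ} {M M' : S × ℕ → Bool} {r : Result} {s : List (RunElem S)} :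
      M (q, i) = false → q ∉ A.F → A.T q = Trans.eps q' →
      MemoRun A w q' i M M' r s →
      MemoRun A w q i M (recFail M' q i r) r (.call q i :: s ++ [r.elem])
  | branchSucc {q q' q'' : S} {i i' : ℕ} {M M' : S × ℕ → Bool} {s : List (RunElem S)} :
      M (q, i) = false → q ∉ A.F → A.T q = Trans.branch q' q'' →
      MemoRun A w q' i M M' (.successAt i') s →
      MemoRun A w q i M M' (.successAt i') (.call q i :: s ++ [RunElem.succ i'])
  | branchFail {q q' q'' : S} {i : ℕ} {M M' M'' : S × ℕ → Bool} {r : Result}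
      {s s' : List (RunElem S)} :
      M (q, i) = false → q ∉ A.F → A.T q = Trans.branch q' q'' →
      MemoRun A w q' i M M' .failure s →
      MemoRun A w q'' i M' M'' r s' →
      MemoRun A w q i M (recFail M'' q i r) r (.call q i :: s ++ s' ++ [r.elem])
  | charSucc {q q' : S} {σ : Sigma} {i : ℕ} {M M' : S × ℕ → Bool} {r : Result}
      {s : List (RunElem S)} :
      M (q, i) = false → q ∉ A.F → A.T q = Trans.char σ q' →
      w[i]? = some σ →
      MemoRun A w q' (i + 1) M M' r s →
      MemoRun A w q i M (recFail M' q i r) r (.call q i :: s ++ [r.elem])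
  | charFail {q q' : S} {σ : Sigma} {i : ℕ} {M : S × ℕ → Bool} :
      M (q, i) = false → q ∉ A.F → A.T q = Trans.char σ q' →
      w[i]? ≠ some σ →
      MemoRun A w q i M (recFail M q i .failure) .failure [.call q i, .fail]

/-! ## NFAs with sub-automata -/

/-- Kind labels of sub-automaton transitions: positive/negative look-ahead/look-behind
and atomic grouping. -/
inductive Kind : Type where
  | pla | nla | plb | nlb | at
deriving DecidableEq

mutual
/-- An NFA with sub-automata `⟨Q, q0, F, T⟩`: a list of top-level states, an initial
state, accepting states, and a transition function (relevant on non-accepting top-level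
states) whose transitions may be labelled with further NFAs with sub-automata. -/
inductive SubNFA (Sigma S : Type) : Type where
  | mk : List S → S → List S → (S → SubTrans Sigma S) → SubNFA Sigma S

/-- Transitions of an NFA with sub-automata. -/
inductive SubTrans (Sigma S : Type) : Type where
  | eps : S → SubTrans Sigma S
  | branch : S → S → SubTrans Sigma S
  | char : Sigma → S → SubTrans Sigma S
  | sub : Kind → SubNFA Sigma S → S → SubTrans Sigma S
end

/-- Top-level states `Q`. -/
def SubNFA.Q : SubNFA Sigma S → List S
  | .mk Q _ _ _ => Q

/-- Initial state `q0`. -/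
def SubNFA.q0 : SubNFA Sigma S → S
  | .mk _ q0 _ _ => q0

/-- Accepting states `F`. -/
def SubNFA.F : SubNFA Sigma S → List S
  | .mk _ _ F _ => F

/-- Transition function `T`. -/
def SubNFA.T : SubNFA Sigma S → S → SubTrans Sigma S
  | .mk _ _ _ T => T

mutual
/-- All automata occurring within an NFA with sub-automata (including itself), each
together with its nesting depth of atomic grouping (the number of enclosing
`at`-sub-automaton boundaries). -/
def SubNFA.compsD : SubNFA Sigma S → List (SubNFA Sigma S × ℕ)
  | .mk Q q0 F T => (.mk Q q0 F T, 0) :: Q.flatMap (fun q => SubTrans.subCompsD (T q))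

def SubTrans.subCompsD : SubTrans Sigma S → List (SubNFA Sigma S × ℕ)
  | .sub k A' _ => (SubNFA.compsD A').map (fun p => (p.1, p.2 + (if k = Kind.at then 1 else 0)))
  | _ => []
end

/-- All automata occurring within `A` (including `A` itself). -/
def SubNFA.comps (A : SubNFA Sigma S) : List (SubNFA Sigma S) :=
  A.compsD.map Prod.fst

/-- The set (list) of all states `P` occurring within `A`. -/
def SubNFA.allStates (A : SubNFA Sigma S) : List S :=
  A.comps.flatMap SubNFA.Q

/-- The nesting depth of atomic grouping `ν_A(q)` of a state `q` of `A`. -/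
def SubNFA.nu [DecidableEq S] (A : SubNFA Sigma S) (q : S) : ℕ :=
  (A.compsD.map (fun p => if q ∈ p.1.Q then p.2 else 0)).sum

/-- The maximal nesting depth of atomic grouping `ν(A)`. -/
def SubNFA.nuMax [DecidableEq S] (A : SubNFA Sigma S) : ℕ :=
  (A.allStates.map A.nu).foldr max 0

/-- Local wellformedness of one automaton: the initial state is a top-level state,
accepting states are top-level states, and transitions of non-accepting top-level
states lead to top-level states. -/
def SubNFA.LocalOK (B : SubNFA Sigma S) : Prop :=
  B.q0 ∈ B.Q ∧ (∀ f ∈ B.F, f ∈ B.Q) ∧ ∀ q ∈ B.Q, q ∉ B.F →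
    match B.T q with
    | .eps q' => q' ∈ B.Q
    | .branch q' q'' => q' ∈ B.Q ∧ q'' ∈ B.Q
    | .char _ q' => q' ∈ B.Q
    | .sub _ _ q' => q' ∈ B.Q

/-- Wellformedness of an NFA with sub-automata: every component automaton is locally
wellformed, and all the state lists are disjoint and duplicate-free (so that `P` is
the disjoint union of the top-level state sets of all components). -/
def SubNFA.WF (A : SubNFA Sigma S) : Prop :=
  (∀ B ∈ A.comps, B.LocalOK) ∧ A.allStates.Nodup

/-- The kind labels of all sub-automaton transitions occurring in `A`. -/
def SubNFA.kinds [DecidableEq S] (A : SubNFA Sigma S) : List Kind :=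
  A.comps.flatMap fun B =>
    (B.Q.filter (fun q => decide (q ∉ B.F))).filterMap fun q =>
      match B.T q with
      | .sub k _ _ => some k
      | _ => none

/-- A la-NFA: all kind labels are look-around labels (for simplicity, only positive
look-ahead `pla` is treated). -/
def SubNFA.IsLaNFA [DecidableEq S] (A : SubNFA Sigma S) : Prop :=
  ∀ k ∈ A.kinds, k = Kind.pla

/-- An at-NFA: all kind labels are `at` (atomic grouping). -/
def SubNFA.IsAtNFA [DecidableEq S] (A : SubNFA Sigma S) : Prop :=
  ∀ k ∈ A.kinds, k = Kind.at

/-- A (la,at)-NFA in which (for simplicity) only the kinds `pla` and `at` occur. -/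
def SubNFA.IsLaAtNFA [DecidableEq S] (A : SubNFA Sigma S) : Prop :=
  ∀ k ∈ A.kinds, k = Kind.pla ∨ k = Kind.at

/-- One global ε-step of an NFA with sub-automata: an `Eps` or `Branch` transition, or a
`Sub` transition with a look-around kind (from the transition's source to its successor),
of a non-accepting top-level state of any component automaton. -/
def SubNFA.epsStep (A : SubNFA Sigma S) (q q' : S) : Prop :=
  ∃ B ∈ A.comps, q ∈ B.Q ∧ q ∉ B.F ∧
    (B.T q = SubTrans.eps q' ∨
     (∃ q'', B.T q = SubTrans.branch q' q'') ∨
     (∃ q'', B.T q = SubTrans.branch q'' q') ∨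
     (∃ k A'', B.T q = SubTrans.sub k A'' q' ∧ k ≠ Kind.at))

/-- The NFA with sub-automata has no ε-loops. -/
def SubNFA.NoEpsLoops (A : SubNFA Sigma S) : Prop :=
  ∀ q : S, ¬ Relation.TransGen A.epsStep q q

/-- All pairs (state, transition) of non-accepting top-level states of all component
automata of `A`. -/
def SubNFA.allTransNF [DecidableEq S] (A : SubNFA Sigma S) : List (S × SubTrans Sigma S) :=
  A.comps.flatMap fun B => (B.Q.filter (fun q => decide (q ∉ B.F))).map fun q => (q, B.T q)

/-- How many of the buckets in the definition of the in-degree of `q` a given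
transition contributes to. -/
def SubTrans.hits [DecidableEq S] (t : SubTrans Sigma S) (q : S) : ℕ :=
  match t with
  | .eps q' => if q' = q then 1 else 0
  | .char _ q' => if q' = q then 1 else 0
  | .branch q' q'' => (if q' = q then 1 else 0) + (if q'' = q then 1 else 0)
  | .sub _ _ q' => if q' = q then 1 else 0

/-- The in-degree `#in(q)` of a state of an NFA with sub-automata. -/
def SubNFA.inDeg [DecidableEq S] (A : SubNFA Sigma S) (q : S) : ℕ :=
  (A.allTransNF.map (fun p => p.2.hits q)).sum +
  (if q ∈ A.comps.map SubNFA.q0 then 1 else 0)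

/-- The maximal in-degree `#in(A)`. -/
def SubNFA.inDegMax [DecidableEq S] (A : SubNFA Sigma S) : ℕ :=
  (A.allStates.map A.inDeg).foldr max 0

/-! ## run elements for `Memo-la` and `Match-(la,at)` -/

/-- Elements of runs of `Memo-la` (and of `Match-(la,at)`): calls `C(q,i)`,
memoization-table invocations `M(q,i)`, and the results `S(i')`, `S'` (bare success),
and `F`. -/
inductive LaRunElem (S : Type) : Type where
  | call : S → ℕ → LaRunElem S
  | memo : S → ℕ → LaRunElem S
  | succAt : ℕ → LaRunElem S
  | succ : LaRunElem S
  | fail : LaRunElem S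
deriving DecidableEq

def LaRunElem.isRet : LaRunElem S → Bool
  | .succAt _ => true
  | .succ => true
  | .fail => true
  | _ => false

def LaRunElem.isCall : LaRunElem S → Bool
  | .call _ _ => true
  | .memo _ _ => true
  | _ => false

def laMemoToCall : LaRunElem S → Option (LaRunElem S)
  | .memo q i => some (.call q i)
  | _ => none

def Result.laElem {S : Type} : Result → LaRunElem S
  | .successAt i => .succAt i
  | .failure => .fail

/-! ## The backtracking matching algorithm `Match-(la,at)` -/

/-- Big-step semantics (with produced run) of the backtracking matching algorithm
`Match-(la,at)` for NFAs with sub-automata: `LAMatchRun w A q i r s` means the call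
`Match-(la,at)_{A,w}(q, i)` terminates with result `r` and produces the run `s`.
For simplicity, only the look-around kind `pla` (besides `at`) is treated. -/
inductive LAMatchRun (w : List Sigma) :
    SubNFA Sigma S → S → ℕ → Result → List (LaRunElem S) → Prop where
  | accept {A : SubNFA Sigma S} {q : S} {i : ℕ} : q ∈ A.F →
      LAMatchRun w A q i (.successAt i) [.call q i, .succAt i]
  | eps {A : SubNFA Sigma S} {q q' : S} {i : ℕ} {r : Result} {s : List (LaRunElem S)} :
      q ∉ A.F → A.T q = SubTrans.eps q' →
      LAMatchRun w A q' i r s →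
      LAMatchRun w A q i r (.call q i :: s ++ [r.laElem])
  | branchSucc {A : SubNFA Sigma S} {q q' q'' : S} {i i' : ℕ} {s : List (LaRunElem S)} :
      q ∉ A.F → A.T q = SubTrans.branch q' q'' →
      LAMatchRun w A q' i (.successAt i') s →
      LAMatchRun w A q i (.successAt i') (.call q i :: s ++ [LaRunElem.succAt i'])
  | branchFail {A : SubNFA Sigma S} {q q' q'' : S} {i : ℕ} {r : Result}
      {s s' : List (LaRunElem S)} :
      q ∉ A.F → A.T q = SubTrans.branch q' q'' →
      LAMatchRun w A q' i .failure s →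
      LAMatchRun w A q'' i r s' →
      LAMatchRun w A q i r (.call q i :: s ++ s' ++ [r.laElem])
  | charSucc {A : SubNFA Sigma S} {q q' : S} {σ : Sigma} {i : ℕ} {r : Result}
      {s : List (LaRunElem S)} :
      q ∉ A.F → A.T q = SubTrans.char σ q' →
      w[i]? = some σ →
      LAMatchRun w A q' (i + 1) r s →
      LAMatchRun w A q i r (.call q i :: s ++ [r.laElem])
  | charFail {A : SubNFA Sigma S} {q q' : S} {σ : Sigma} {i : ℕ} :
      q ∉ A.F → A.T q = SubTrans.char σ q' →
      w[i]? ≠ some σ →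
      LAMatchRun w A q i .failure [.call q i, .fail]
  | plaSucc {A A' : SubNFA Sigma S} {q q' : S} {i i' : ℕ} {r : Result}
      {s1 s2 : List (LaRunElem S)} :
      q ∉ A.F → A.T q = SubTrans.sub Kind.pla A' q' →
      LAMatchRun w A' A'.q0 i (.successAt i') s1 →
      LAMatchRun w A q' i r s2 →
      LAMatchRun w A q i r (.call q i :: s1 ++ s2 ++ [r.laElem])
  | plaFail {A A' : SubNFA Sigma S} {q q' : S} {i : ℕ} {s1 : List (LaRunElem S)} :
      q ∉ A.F → A.T q = SubTrans.sub Kind.pla A' q' →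
      LAMatchRun w A' A'.q0 i .failure s1 →
      LAMatchRun w A q i .failure (.call q i :: s1 ++ [LaRunElem.fail])
  | atSucc {A A' : SubNFA Sigma S} {q q' : S} {i i' : ℕ} {r : Result}
      {s1 s2 : List (LaRunElem S)} :
      q ∉ A.F → A.T q = SubTrans.sub Kind.at A' q' →
      LAMatchRun w A' A'.q0 i (.successAt i') s1 →
      LAMatchRun w A q' i' r s2 →
      LAMatchRun w A q i r (.call q i :: s1 ++ s2 ++ [r.laElem])
  | atFail {A A' : SubNFA Sigma S} {q q' : S} {i : ℕ} {s1 : List (LaRunElem S)} :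
      q ∉ A.F → A.T q = SubTrans.sub Kind.at A' q' →
      LAMatchRun w A' A'.q0 i .failure s1 →
      LAMatchRun w A q i .failure (.call q i :: s1 ++ [LaRunElem.fail])

/-! ## `Memo-la` -/

/-- Values of the memoization table of `Memo-la`: `Failure` or `Success`. -/
inductive LaVal : Type where
  | success : LaVal
  | failure : LaVal
deriving DecidableEq

/-- Results of `Memo-la`: `SuccessAt i'`, bare `Success`, or `Failure`. -/
inductive LaResult : Type where
  | successAt : ℕ → LaResult
  | success : LaResult
  | failure : LaResult
deriving DecidableEq

def LaVal.toResult : LaVal → LaResult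
  | .success => .success
  | .failure => .failure

def LaResult.elem {S : Type} : LaResult → LaRunElem S
  | .successAt i => .succAt i
  | .success => .succ
  | .failure => .fail

def Result.toLa : Result → LaResult
  | .successAt i => .successAt i
  | .failure => .failure

/-- The final recording of `Memo-la`: `M(q,i) := Success` if the result is
`SuccessAt i'` or `Success`, and `M(q,i) := Failure` if the result is `Failure`. -/
def laRecord [DecidableEq S] (M : S × ℕ → Option LaVal) (q : S) (i : ℕ) (r : LaResult) :
    S × ℕ → Option LaVal :=
  fun p => if p = (q, i) then
    some (match r with | .failure => LaVal.failure | _ => LaVal.success)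
  else M p

/-- Big-step semantics (with resulting memoization table and produced run) of the
memoized backtracking matching algorithm `Memo-la` for la-NFAs:
`MemoLaRun w A q i M M' r s` means the call `Memo-la^M_{A,w}(q, i)` terminates with
result `r`, final memoization table `M'`, and produces the run `s`. The memoization
table is shared between the top-level automaton and all sub-automata. -/
inductive MemoLaRun [DecidableEq S] (w : List Sigma) :
    SubNFA Sigma S → S → ℕ → (S × ℕ → Option LaVal) → (S × ℕ → Option LaVal) →
    LaResult → List (LaRunElem S) → Prop where
  | memoHit {A : SubNFA Sigma S} {q : S} {i : ℕ} {M : S × ℕ → Option LaVal} {v : LaVal} :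
      M (q, i) = some v →
      MemoLaRun w A q i M M v.toResult [.memo q i, v.toResult.elem]
  | accept {A : SubNFA Sigma S} {q : S} {i : ℕ} {M : S × ℕ → Option LaVal} :
      M (q, i) = none → q ∈ A.F →
      MemoLaRun w A q i M (laRecord M q i (.successAt i)) (.successAt i)
        [.call q i, .succAt i]
  | eps {A : SubNFA Sigma S} {q q' : S} {i : ℕ} {M M' : S × ℕ → Option LaVal}
      {r : LaResult} {s : List (LaRunElem S)} :
      M (q, i) = none → q ∉ A.F → A.T q = SubTrans.eps q' →
      MemoLaRun w A q' i M M' r s →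
      MemoLaRun w A q i M (laRecord M' q i r) r (.call q i :: s ++ [r.elem])
  | branchNoFail {A : SubNFA Sigma S} {q q' q'' : S} {i : ℕ}
      {M M' : S × ℕ → Option LaVal} {r : LaResult} {s : List (LaRunElem S)} :
      M (q, i) = none → q ∉ A.F → A.T q = SubTrans.branch q' q'' →
      MemoLaRun w A q' i M M' r s → r ≠ .failure →
      MemoLaRun w A q i M (laRecord M' q i r) r (.call q i :: s ++ [r.elem])
  | branchFail {A : SubNFA Sigma S} {q q' q'' : S} {i : ℕ}
      {M M1 M2 : S × ℕ → Option LaVal} {r : LaResult} {s1 s2 : List (LaRunElem S)} :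
      M (q, i) = none → q ∉ A.F → A.T q = SubTrans.branch q' q'' →
      MemoLaRun w A q' i M M1 .failure s1 →
      MemoLaRun w A q'' i M1 M2 r s2 →
      MemoLaRun w A q i M (laRecord M2 q i r) r (.call q i :: s1 ++ s2 ++ [r.elem])
  | charSucc {A : SubNFA Sigma S} {q q' : S} {σ : Sigma} {i : ℕ}
      {M M' : S × ℕ → Option LaVal} {r : LaResult} {s : List (LaRunElem S)} :
      M (q, i) = none → q ∉ A.F → A.T q = SubTrans.char σ q' →
      w[i]? = some σ →
      MemoLaRun w A q' (i + 1) M M' r s →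
      MemoLaRun w A q i M (laRecord M' q i r) r (.call q i :: s ++ [r.elem])
  | charFail {A : SubNFA Sigma S} {q q' : S} {σ : Sigma} {i : ℕ}
      {M : S × ℕ → Option LaVal} :
      M (q, i) = none → q ∉ A.F → A.T q = SubTrans.char σ q' →
      w[i]? ≠ some σ →
      MemoLaRun w A q i M (laRecord M q i .failure) .failure [.call q i, .fail]
  | plaSucc {A A' : SubNFA Sigma S} {q q' : S} {i : ℕ}
      {M M1 M2 : S × ℕ → Option LaVal} {r1 r : LaResult} {s1 s2 : List (LaRunElem S)} :
      M (q, i) = none → q ∉ A.F → A.T q = SubTrans.sub Kind.pla A' q' →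
      MemoLaRun w A' A'.q0 i M M1 r1 s1 → r1 ≠ .failure →
      MemoLaRun w A q' i M1 M2 r s2 →
      MemoLaRun w A q i M (laRecord M2 q i r) r (.call q i :: s1 ++ s2 ++ [r.elem])
  | plaFail {A A' : SubNFA Sigma S} {q q' : S} {i : ℕ}
      {M M1 : S × ℕ → Option LaVal} {s1 : List (LaRunElem S)} :
      M (q, i) = none → q ∉ A.F → A.T q = SubTrans.sub Kind.pla A' q' →
      MemoLaRun w A' A'.q0 i M M1 .failure s1 →
      MemoLaRun w A q i M (laRecord M1 q i .failure) .failure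
        (.call q i :: s1 ++ [LaRunElem.fail])

/-! ## `Memo-at` -/

/-- Results of `Memo-at`: `SuccessAt(i', K)` with a set `K` of delayed memoization keys,
or `Failure(j)` with a nesting depth `j`. -/
inductive AtResult (S : Type) : Type where
  | successAt : ℕ → Finset (S × ℕ) → AtResult S
  | failure : ℕ → AtResult S

/-- Elements of runs of `Memo-at`: calls `C(q,i)`, memoization-table invocations
`M(q,i)`, and results `S(i')` and `F(j)`. -/
inductive AtRunElem (S : Type) : Type where
  | call : S → ℕ → AtRunElem S
  | memo : S → ℕ → AtRunElem S
  | succ : ℕ → AtRunElem S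
  | fail : ℕ → AtRunElem S
deriving DecidableEq

def AtRunElem.isRet : AtRunElem S → Bool
  | .succ _ => true
  | .fail _ => true
  | _ => false

def AtRunElem.isCall : AtRunElem S → Bool
  | .call _ _ => true
  | .memo _ _ => true
  | _ => false

def atMemoToCall : AtRunElem S → Option (AtRunElem S)
  | .memo q i => some (.call q i)
  | _ => none

def AtResult.elem {S : Type} : AtResult S → AtRunElem S
  | .successAt i _ => .succ i
  | .failure j => .fail j

/-- `f`, converting results of `Memo-at` to results of `Match-(la,at)`. -/
def AtResult.toResult {S : Type} : AtResult S → Result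
  | .successAt i _ => .successAt i
  | .failure _ => .failure

/-- The final step of `Memo-at`: on success, the key `(q,i)` is added to the set of
delayed keys. -/
def atFinal [DecidableEq S] (q : S) (i : ℕ) : AtResult S → AtResult S
  | .successAt i' K => .successAt i' (insert (q, i) K)
  | .failure j => .failure j

/-- The final recording of `Memo-at`: `M(q,i) := Failure(j)` if the result is
`Failure(j)`. -/
def atRecord [DecidableEq S] (M : S × ℕ → Option ℕ) (q : S) (i : ℕ) :
    AtResult S → (S × ℕ → Option ℕ)
  | .failure j => fun p => if p = (q, i) then some j else M p
  | _ => M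

/-- Batch recording `M(k) := Failure(j)` for every `k ∈ K`. -/
def atBatch [DecidableEq S] (M : S × ℕ → Option ℕ) (K : Finset (S × ℕ)) (j : ℕ) :
    S × ℕ → Option ℕ :=
  fun p => if p ∈ K then some j else M p

/-- Big-step semantics (with resulting memoization table and produced run) of the
memoized backtracking matching algorithm `Memo-at` for at-NFAs:
`MemoAtRun A0 w A q i M M' r s` means the call `Memo-at^M_{A0,A,w}(q, i)` (with the
whole automaton `A0` and current sub-automaton `A`) terminates with result `r`, final
memoization table `M'`, and produces the run `s`. -/
inductive MemoAtRun [DecidableEq S] (A0 : SubNFA Sigma S) (w : List Sigma) :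
    SubNFA Sigma S → S → ℕ → (S × ℕ → Option ℕ) → (S × ℕ → Option ℕ) →
    AtResult S → List (AtRunElem S) → Prop where
  | memoHit {A : SubNFA Sigma S} {q : S} {i j : ℕ} {M : S × ℕ → Option ℕ} :
      M (q, i) = some j →
      MemoAtRun A0 w A q i M M (.failure j) [.memo q i, .fail j]
  | accept {A : SubNFA Sigma S} {q : S} {i : ℕ} {M : S × ℕ → Option ℕ} :
      M (q, i) = none → q ∈ A.F →
      MemoAtRun A0 w A q i M M (.successAt i {(q, i)}) [.call q i, .succ i]
  | eps {A : SubNFA Sigma S} {q q' : S} {i : ℕ} {M M' : S × ℕ → Option ℕ}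
      {r : AtResult S} {s : List (AtRunElem S)} :
      M (q, i) = none → q ∉ A.F → A.T q = SubTrans.eps q' →
      MemoAtRun A0 w A q' i M M' r s →
      MemoAtRun A0 w A q i M (atRecord M' q i r) (atFinal q i r)
        (.call q i :: s ++ [r.elem])
  | branchNoBT {A : SubNFA Sigma S} {q q' q'' : S} {i : ℕ} {M M' : S × ℕ → Option ℕ}
      {r : AtResult S} {s : List (AtRunElem S)} :
      M (q, i) = none → q ∉ A.F → A.T q = SubTrans.branch q' q'' →
      MemoAtRun A0 w A q' i M M' r s →
      (∀ j, r = AtResult.failure j → j ≠ A0.nu q) →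
      MemoAtRun A0 w A q i M (atRecord M' q i r) (atFinal q i r)
        (.call q i :: s ++ [r.elem])
  | branchBTSucc {A : SubNFA Sigma S} {q q' q'' : S} {i i'' : ℕ} {K : Finset (S × ℕ)}
      {M M1 M2 : S × ℕ → Option ℕ} {s1 s2 : List (AtRunElem S)} :
      M (q, i) = none → q ∉ A.F → A.T q = SubTrans.branch q' q'' →
      MemoAtRun A0 w A q' i M M1 (.failure (A0.nu q)) s1 →
      MemoAtRun A0 w A q'' i M1 M2 (.successAt i'' K) s2 →
      MemoAtRun A0 w A q i M M2 (atFinal q i (.successAt i'' K))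
        (.call q i :: s1 ++ s2 ++ [AtRunElem.succ i''])
  | branchBTFail {A : SubNFA Sigma S} {q q' q'' : S} {i j' : ℕ}
      {M M1 M2 : S × ℕ → Option ℕ} {s1 s2 : List (AtRunElem S)} :
      M (q, i) = none → q ∉ A.F → A.T q = SubTrans.branch q' q'' →
      MemoAtRun A0 w A q' i M M1 (.failure (A0.nu q)) s1 →
      MemoAtRun A0 w A q'' i M1 M2 (.failure j') s2 →
      MemoAtRun A0 w A q i M (atRecord M2 q i (.failure (min (A0.nu q) j')))
        (.failure (min (A0.nu q) j'))
        (.call q i :: s1 ++ s2 ++ [AtRunElem.fail (min (A0.nu q) j')])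
  | charSucc {A : SubNFA Sigma S} {q q' : S} {σ : Sigma} {i : ℕ}
      {M M' : S × ℕ → Option ℕ} {r : AtResult S} {s : List (AtRunElem S)} :
      M (q, i) = none → q ∉ A.F → A.T q = SubTrans.char σ q' →
      w[i]? = some σ →
      MemoAtRun A0 w A q' (i + 1) M M' r s →
      MemoAtRun A0 w A q i M (atRecord M' q i r) (atFinal q i r)
        (.call q i :: s ++ [r.elem])
  | charFail {A : SubNFA Sigma S} {q q' : S} {σ : Sigma} {i : ℕ}
      {M : S × ℕ → Option ℕ} :
      M (q, i) = none → q ∉ A.F → A.T q = SubTrans.char σ q' →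
      w[i]? ≠ some σ →
      MemoAtRun A0 w A q i M (atRecord M q i (.failure (A0.nu q)))
        (.failure (A0.nu q)) [.call q i, .fail (A0.nu q)]
  | subSuccSucc {A A' : SubNFA Sigma S} {q q' : S} {i i' i'' : ℕ}
      {K' K'' : Finset (S × ℕ)} {M M1 M2 : S × ℕ → Option ℕ}
      {s1 s2 : List (AtRunElem S)} :
      M (q, i) = none → q ∉ A.F → A.T q = SubTrans.sub Kind.at A' q' →
      MemoAtRun A0 w A' A'.q0 i M M1 (.successAt i' K') s1 →
      MemoAtRun A0 w A q' i' M1 M2 (.successAt i'' K'') s2 →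
      MemoAtRun A0 w A q i M M2 (atFinal q i (.successAt i'' (K' ∪ K'')))
        (.call q i :: s1 ++ s2 ++ [AtRunElem.succ i''])
  | subSuccFail {A A' : SubNFA Sigma S} {q q' : S} {i i' j : ℕ} {K' : Finset (S × ℕ)}
      {M M1 M2 : S × ℕ → Option ℕ} {s1 s2 : List (AtRunElem S)} :
      M (q, i) = none → q ∉ A.F → A.T q = SubTrans.sub Kind.at A' q' →
      MemoAtRun A0 w A' A'.q0 i M M1 (.successAt i' K') s1 →
      MemoAtRun A0 w A q' i' M1 M2 (.failure j) s2 →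
      MemoAtRun A0 w A q i M (atRecord (atBatch M2 K' j) q i (.failure j)) (.failure j)
        (.call q i :: s1 ++ s2 ++ [AtRunElem.fail j])
  | subFailHigh {A A' : SubNFA Sigma S} {q q' : S} {i j : ℕ}
      {M M1 : S × ℕ → Option ℕ} {s1 : List (AtRunElem S)} :
      M (q, i) = none → q ∉ A.F → A.T q = SubTrans.sub Kind.at A' q' →
      MemoAtRun A0 w A' A'.q0 i M M1 (.failure j) s1 →
      A0.nu q < j →
      MemoAtRun A0 w A q i M (atRecord M1 q i (.failure (A0.nu q)))
        (.failure (A0.nu q)) (.call q i :: s1 ++ [AtRunElem.fail (A0.nu q)])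
  | subFailLow {A A' : SubNFA Sigma S} {q q' : S} {i j : ℕ}
      {M M1 : S × ℕ → Option ℕ} {s1 : List (AtRunElem S)} :
      M (q, i) = none → q ∉ A.F → A.T q = SubTrans.sub Kind.at A' q' →
      MemoAtRun A0 w A' A'.q0 i M M1 (.failure j) s1 →
      j ≤ A0.nu q →
      MemoAtRun A0 w A q i M (atRecord M1 q i (.failure j)) (.failure j)
        (.call q i :: s1 ++ [AtRunElem.fail j])

/-! ## The combined algorithm `Memo-(la,at)` -/

/-- Values of the memoization table of `Memo-(la,at)`: `Success` or `Failure(j)`. -/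
inductive LaAtVal : Type where
  | success : LaAtVal
  | failure : ℕ → LaAtVal

/-- Results of `Memo-(la,at)`: `SuccessAt(i', K)`, bare `Success`, or `Failure(j)`. -/
inductive LaAtResult (S : Type) : Type where
  | successAt : ℕ → Finset (S × ℕ) → LaAtResult S
  | success : LaAtResult S
  | failure : ℕ → LaAtResult S

def LaAtVal.toResult {S : Type} : LaAtVal → LaAtResult S
  | .success => .success
  | .failure j => .failure j

/-- `f`, converting results of `Memo-(la,at)` to results of `Match-(la,at)`
(undefined on the bare value `Success`). -/
def LaAtResult.toResult? {S : Type} : LaAtResult S → Option Result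
  | .successAt i _ => some (.successAt i)
  | .success => none
  | .failure _ => some .failure

def laAtFinal [DecidableEq S] (q : S) (i : ℕ) : LaAtResult S → LaAtResult S
  | .successAt i' K => .successAt i' (insert (q, i) K)
  | r => r

def laAtRecord [DecidableEq S] (M : S × ℕ → Option LaAtVal) (q : S) (i : ℕ) :
    LaAtResult S → (S × ℕ → Option LaAtVal)
  | .successAt _ _ => M
  | .success => fun p => if p = (q, i) then some LaAtVal.success else M p
  | .failure j => fun p => if p = (q, i) then some (LaAtVal.failure j) else M p

def laAtBatch [DecidableEq S] (M : S × ℕ → Option LaAtVal) (K : Finset (S × ℕ))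
    (v : LaAtVal) : S × ℕ → Option LaAtVal :=
  fun p => if p ∈ K then some v else M p

/-- Big-step semantics (with resulting memoization table and the number of recursive
calls made) of the combined memoized backtracking matching algorithm `Memo-(la,at)`:
`MemoLaAtRun w A0 A q i M M' r n` means the call `Memo-(la,at)^M_{A0,A,w}(q, i)`
terminates with result `r`, final memoization table `M'`, making `n` calls in total.
On a positive look-ahead transition, the sub-automaton becomes the new whole automaton
(so nesting depths of atomic grouping are reset by look-around operators). -/
inductive MemoLaAtRun [DecidableEq S] (w : List Sigma) :
    SubNFA Sigma S → SubNFA Sigma S → S → ℕ →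
    (S × ℕ → Option LaAtVal) → (S × ℕ → Option LaAtVal) → LaAtResult S → ℕ → Prop where
  | memoHit {A0 A : SubNFA Sigma S} {q : S} {i : ℕ} {M : S × ℕ → Option LaAtVal}
      {v : LaAtVal} :
      M (q, i) = some v →
      MemoLaAtRun w A0 A q i M M v.toResult 1
  | accept {A0 A : SubNFA Sigma S} {q : S} {i : ℕ} {M : S × ℕ → Option LaAtVal} :
      M (q, i) = none → q ∈ A.F →
      MemoLaAtRun w A0 A q i M M (.successAt i {(q, i)}) 1
  | eps {A0 A : SubNFA Sigma S} {q q' : S} {i : ℕ} {M M' : S × ℕ → Option LaAtVal}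
      {r : LaAtResult S} {n : ℕ} :
      M (q, i) = none → q ∉ A.F → A.T q = SubTrans.eps q' →
      MemoLaAtRun w A0 A q' i M M' r n →
      MemoLaAtRun w A0 A q i M (laAtRecord M' q i (laAtFinal q i r)) (laAtFinal q i r)
        (n + 1)
  | branchNoBT {A0 A : SubNFA Sigma S} {q q' q'' : S} {i : ℕ}
      {M M' : S × ℕ → Option LaAtVal} {r : LaAtResult S} {n : ℕ} :
      M (q, i) = none → q ∉ A.F → A.T q = SubTrans.branch q' q'' →
      MemoLaAtRun w A0 A q' i M M' r n →
      (∀ j, r = LaAtResult.failure j → j ≠ A0.nu q) →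
      MemoLaAtRun w A0 A q i M (laAtRecord M' q i (laAtFinal q i r)) (laAtFinal q i r)
        (n + 1)
  | branchBTFail {A0 A : SubNFA Sigma S} {q q' q'' : S} {i j' : ℕ}
      {M M1 M2 : S × ℕ → Option LaAtVal} {n1 n2 : ℕ} :
      M (q, i) = none → q ∉ A.F → A.T q = SubTrans.branch q' q'' →
      MemoLaAtRun w A0 A q' i M M1 (.failure (A0.nu q)) n1 →
      MemoLaAtRun w A0 A q'' i M1 M2 (.failure j') n2 →
      MemoLaAtRun w A0 A q i M
        (laAtRecord M2 q i (.failure (min (A0.nu q) j')))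
        (.failure (min (A0.nu q) j')) (n1 + n2 + 1)
  | branchBTOther {A0 A : SubNFA Sigma S} {q q' q'' : S} {i : ℕ}
      {M M1 M2 : S × ℕ → Option LaAtVal} {r : LaAtResult S} {n1 n2 : ℕ} :
      M (q, i) = none → q ∉ A.F → A.T q = SubTrans.branch q' q'' →
      MemoLaAtRun w A0 A q' i M M1 (.failure (A0.nu q)) n1 →
      MemoLaAtRun w A0 A q'' i M1 M2 r n2 →
      (∀ j, r ≠ LaAtResult.failure j) →
      MemoLaAtRun w A0 A q i M (laAtRecord M2 q i (laAtFinal q i r)) (laAtFinal q i r)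
        (n1 + n2 + 1)
  | charSucc {A0 A : SubNFA Sigma S} {q q' : S} {σ : Sigma} {i : ℕ}
      {M M' : S × ℕ → Option LaAtVal} {r : LaAtResult S} {n : ℕ} :
      M (q, i) = none → q ∉ A.F → A.T q = SubTrans.char σ q' →
      w[i]? = some σ →
      MemoLaAtRun w A0 A q' (i + 1) M M' r n →
      MemoLaAtRun w A0 A q i M (laAtRecord M' q i (laAtFinal q i r)) (laAtFinal q i r)
        (n + 1)
  | charFail {A0 A : SubNFA Sigma S} {q q' : S} {σ : Sigma} {i : ℕ}
      {M : S × ℕ → Option LaAtVal} :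
      M (q, i) = none → q ∉ A.F → A.T q = SubTrans.char σ q' →
      w[i]? ≠ some σ →
      MemoLaAtRun w A0 A q i M (laAtRecord M q i (.failure (A0.nu q)))
        (.failure (A0.nu q)) 1
  | plaSuccAt {A0 A A' : SubNFA Sigma S} {q q' : S} {i i' : ℕ} {K' : Finset (S × ℕ)}
      {M M1 M2 : S × ℕ → Option LaAtVal} {r : LaAtResult S} {n1 n2 : ℕ} :
      M (q, i) = none → q ∉ A.F → A.T q = SubTrans.sub Kind.pla A' q' →
      MemoLaAtRun w A' A' A'.q0 i M M1 (.successAt i' K') n1 →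
      MemoLaAtRun w A0 A q' i (laAtBatch M1 K' LaAtVal.success) M2 r n2 →
      MemoLaAtRun w A0 A q i M (laAtRecord M2 q i (laAtFinal q i r)) (laAtFinal q i r)
        (n1 + n2 + 1)
  | plaBare {A0 A A' : SubNFA Sigma S} {q q' : S} {i : ℕ}
      {M M1 M2 : S × ℕ → Option LaAtVal} {r : LaAtResult S} {n1 n2 : ℕ} :
      M (q, i) = none → q ∉ A.F → A.T q = SubTrans.sub Kind.pla A' q' →
      MemoLaAtRun w A' A' A'.q0 i M M1 .success n1 →
      MemoLaAtRun w A0 A q' i M1 M2 r n2 →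
      MemoLaAtRun w A0 A q i M (laAtRecord M2 q i (laAtFinal q i r)) (laAtFinal q i r)
        (n1 + n2 + 1)
  | plaFail {A0 A A' : SubNFA Sigma S} {q q' : S} {i j : ℕ}
      {M M1 : S × ℕ → Option LaAtVal} {n1 : ℕ} :
      M (q, i) = none → q ∉ A.F → A.T q = SubTrans.sub Kind.pla A' q' →
      MemoLaAtRun w A' A' A'.q0 i M M1 (.failure j) n1 →
      MemoLaAtRun w A0 A q i M (laAtRecord M1 q i (.failure (A0.nu q)))
        (.failure (A0.nu q)) (n1 + 1)
  | atSuccSucc {A0 A A' : SubNFA Sigma S} {q q' : S} {i i' i'' : ℕ}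
      {K' K'' : Finset (S × ℕ)} {M M1 M2 : S × ℕ → Option LaAtVal} {n1 n2 : ℕ} :
      M (q, i) = none → q ∉ A.F → A.T q = SubTrans.sub Kind.at A' q' →
      MemoLaAtRun w A0 A' A'.q0 i M M1 (.successAt i' K') n1 →
      MemoLaAtRun w A0 A q' i' M1 M2 (.successAt i'' K'') n2 →
      MemoLaAtRun w A0 A q i M M2
        (laAtFinal q i (.successAt i'' (K' ∪ K''))) (n1 + n2 + 1)
  | atSuccBare {A0 A A' : SubNFA Sigma S} {q q' : S} {i i' : ℕ} {K' : Finset (S × ℕ)}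
      {M M1 M2 : S × ℕ → Option LaAtVal} {n1 n2 : ℕ} :
      M (q, i) = none → q ∉ A.F → A.T q = SubTrans.sub Kind.at A' q' →
      MemoLaAtRun w A0 A' A'.q0 i M M1 (.successAt i' K') n1 →
      MemoLaAtRun w A0 A q' i' M1 M2 .success n2 →
      MemoLaAtRun w A0 A q i M
        (laAtRecord (laAtBatch M2 K' LaAtVal.success) q i .success) .success
        (n1 + n2 + 1)
  | atSuccFail {A0 A A' : SubNFA Sigma S} {q q' : S} {i i' j : ℕ} {K' : Finset (S × ℕ)}
      {M M1 M2 : S × ℕ → Option LaAtVal} {n1 n2 : ℕ} :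
      M (q, i) = none → q ∉ A.F → A.T q = SubTrans.sub Kind.at A' q' →
      MemoLaAtRun w A0 A' A'.q0 i M M1 (.successAt i' K') n1 →
      MemoLaAtRun w A0 A q' i' M1 M2 (.failure j) n2 →
      MemoLaAtRun w A0 A q i M
        (laAtRecord (laAtBatch M2 K' (LaAtVal.failure j)) q i (.failure j))
        (.failure j) (n1 + n2 + 1)
  | atBare {A0 A A' : SubNFA Sigma S} {q q' : S} {i : ℕ}
      {M M1 : S × ℕ → Option LaAtVal} {n1 : ℕ} :
      M (q, i) = none → q ∉ A.F → A.T q = SubTrans.sub Kind.at A' q' →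
      MemoLaAtRun w A0 A' A'.q0 i M M1 .success n1 →
      MemoLaAtRun w A0 A q i M (laAtRecord M1 q i .success) .success (n1 + 1)
  | atFailHigh {A0 A A' : SubNFA Sigma S} {q q' : S} {i j : ℕ}
      {M M1 : S × ℕ → Option LaAtVal} {n1 : ℕ} :
      M (q, i) = none → q ∉ A.F → A.T q = SubTrans.sub Kind.at A' q' →
      MemoLaAtRun w A0 A' A'.q0 i M M1 (.failure j) n1 →
      A0.nu q < j →
      MemoLaAtRun w A0 A q i M (laAtRecord M1 q i (.failure (A0.nu q)))
        (.failure (A0.nu q)) (n1 + 1)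
  | atFailLow {A0 A A' : SubNFA Sigma S} {q q' : S} {i j : ℕ}
      {M M1 : S × ℕ → Option LaAtVal} {n1 : ℕ} :
      M (q, i) = none → q ∉ A.F → A.T q = SubTrans.sub Kind.at A' q' →
      MemoLaAtRun w A0 A' A'.q0 i M M1 (.failure j) n1 →
      j ≤ A0.nu q →
      MemoLaAtRun w A0 A q i M (laAtRecord M1 q i (.failure j)) (.failure j) (n1 + 1)

/-!
Two invariants of the shared table explain why memoization is harmless. First, every entry is
truthful: it describes the result `Match-(la,at)` returns on its key; disjointness of the state
sets determines the automaton a key belongs to. Second, as long as a call in an automaton `B` can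
still matter, no state of `B` carries a recorded `Success`: a success inside `B` ends all pending
calls in `B` at once, and a look-ahead writes only to states of its own sub-automaton. Hence a call
started without recorded successes for `B` never returns the bare value `Success`, which would lose
the end position. A look-ahead itself may return `Success`, but its caller only asks whether it
succeeded.
-/

/-! ## Components of an automaton -/

theorem SubNFA.comps_eq_cons (A : SubNFA Sigma S) :
    A.comps = A :: A.Q.flatMap fun q => (A.T q).subCompsD.map Prod.fst := by
  cases A
  simp [SubNFA.comps, SubNFA.compsD, SubNFA.Q, SubNFA.T, List.map_flatMap]

theorem SubTrans.map_fst_subCompsD_sub (k : Kind) (A : SubNFA Sigma S) (q : S) :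
    (SubTrans.sub k A q).subCompsD.map Prod.fst = A.comps := by
  simp [SubTrans.subCompsD, SubNFA.comps, Function.comp_def]

theorem SubNFA.cons_subCompsD_sublist_comps {A : SubNFA Sigma S} {q : S} (hq : q ∈ A.Q) :
    (A :: (A.T q).subCompsD.map Prod.fst).Sublist A.comps := by
  rw [A.comps_eq_cons, List.flatMap]
  exact .cons_cons A (List.sublist_flatten_of_mem (List.mem_map.2 ⟨q, hq, rfl⟩))

theorem SubNFA.self_mem_comps (A : SubNFA Sigma S) : A ∈ A.comps := by
  simp [A.comps_eq_cons]

theorem SubNFA.cons_comps_sublist_comps {A A' : SubNFA Sigma S} {q q' : S} {k : Kind}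
    (hq : q ∈ A.Q) (hT : A.T q = .sub k A' q') : (A :: A'.comps).Sublist A.comps := by
  rw [← SubTrans.map_fst_subCompsD_sub k A' q', ← hT]
  exact cons_subCompsD_sublist_comps hq

theorem SubNFA.comps_sublist_comps_of_mem {A B : SubNFA Sigma S} (hB : B ∈ A.comps) :
    B.comps.Sublist A.comps := by
  induction A using SubNFA.rec
    (motive_2 := fun t => B ∈ t.subCompsD.map Prod.fst →
      B.comps.Sublist (t.subCompsD.map Prod.fst)) with
  | mk Q q0 F T ih =>
    rw [comps_eq_cons] at hB
    rcases List.mem_cons.1 hB with rfl | hB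
    · rfl
    · obtain ⟨q, hq, hB⟩ := List.mem_flatMap.1 hB
      exact (ih q hB).trans ((List.sublist_cons_self _ _).trans (cons_subCompsD_sublist_comps hq))
  | sub k A' q' ih hB =>
    rw [SubTrans.map_fst_subCompsD_sub] at hB ⊢
    exact ih hB
  | _ => simp_all [SubTrans.subCompsD]

theorem SubNFA.mem_comps_of_sub {A B A' : SubNFA Sigma S} {q q' : S} {k : Kind}
    (hB : B ∈ A.comps) (hq : q ∈ B.Q) (hT : B.T q = .sub k A' q') : A' ∈ A.comps :=
  (comps_sublist_comps_of_mem hB).subset <|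
    (cons_comps_sublist_comps hq hT).subset <| List.mem_cons_of_mem _ A'.self_mem_comps

theorem SubNFA.mem_allStates_of_mem_Q {A : SubNFA Sigma S} {q : S} (hq : q ∈ A.Q) :
    q ∈ A.allStates :=
  List.mem_flatMap_of_mem A.self_mem_comps hq

theorem SubNFA.allStates_subset_of_sub {A A' : SubNFA Sigma S} {q q' : S} {k : Kind}
    (hq : q ∈ A.Q) (hT : A.T q = .sub k A' q') : A'.allStates ⊆ A.allStates :=
  (((List.sublist_cons_self _ _).trans (cons_comps_sublist_comps hq hT)).flatMap SubNFA.Q).subset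

/-! ## Well-formed automata -/

namespace SubNFA.LocalOK

variable {B A' : SubNFA Sigma S} {q q' q'' : S} {σ : Sigma} {k : Kind}

theorem mem_of_eps (h : B.LocalOK) (hq : q ∈ B.Q) (hF : q ∉ B.F) (hT : B.T q = .eps q') :
    q' ∈ B.Q := by
  simpa [hT] using h.2.2 q hq hF

theorem mem_of_branch (h : B.LocalOK) (hq : q ∈ B.Q) (hF : q ∉ B.F)
    (hT : B.T q = .branch q' q'') : q' ∈ B.Q ∧ q'' ∈ B.Q := by
  simpa [hT] using h.2.2 q hq hF

theorem mem_of_char (h : B.LocalOK) (hq : q ∈ B.Q) (hF : q ∉ B.F) (hT : B.T q = .char σ q') :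
    q' ∈ B.Q := by
  simpa [hT] using h.2.2 q hq hF

theorem mem_of_sub (h : B.LocalOK) (hq : q ∈ B.Q) (hF : q ∉ B.F) (hT : B.T q = .sub k A' q') :
    q' ∈ B.Q := by
  simpa [hT] using h.2.2 q hq hF

end SubNFA.LocalOK

theorem SubNFA.WF.localOK {A : SubNFA Sigma S} (h : A.WF) : A.LocalOK :=
  h.1 A A.self_mem_comps

theorem SubNFA.WF.of_mem_comps {A B : SubNFA Sigma S} (h : A.WF) (hB : B ∈ A.comps) : B.WF :=
  have hsub := comps_sublist_comps_of_mem hB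
  ⟨fun C hC => h.1 C (hsub.subset hC), (hsub.flatMap SubNFA.Q).nodup h.2⟩

theorem SubNFA.WF.of_sub {A A' : SubNFA Sigma S} {q q' : S} {k : Kind} (h : A.WF)
    (hq : q ∈ A.Q) (hT : A.T q = .sub k A' q') : A'.WF :=
  h.of_mem_comps (mem_comps_of_sub A.self_mem_comps hq hT)

theorem SubNFA.WF.eq_of_mem_Q {A B C : SubNFA Sigma S} (h : A.WF) (hB : B ∈ A.comps)
    (hC : C ∈ A.comps) {q : S} (hqB : q ∈ B.Q) (hqC : q ∈ C.Q) : B = C := by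
  have hdisj := (List.nodup_flatMap.1 h.2).2
  have : Std.Symm (Function.onFun List.Disjoint (SubNFA.Q (Sigma := Sigma) (S := S))) :=
    ⟨fun _ _ hd => hd.symm⟩
  by_contra hne
  exact hdisj.forall hB hC hne hqB hqC

theorem SubNFA.WF.notMem_allStates_of_sub {A A' : SubNFA Sigma S} {q q' p : S} {k : Kind}
    (h : A.WF) (hq : q ∈ A.Q) (hT : A.T q = .sub k A' q') (hp : p ∈ A.Q) :
    p ∉ A'.allStates := by
  have hnodup := (cons_comps_sublist_comps hq hT).flatMap (f := SubNFA.Q) |>.nodup h.2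
  rw [List.flatMap_cons] at hnodup
  exact fun hp' => List.disjoint_of_nodup_append hnodup hp hp'

theorem SubNFA.IsLaNFA.eq_pla [DecidableEq S] {A B A' : SubNFA Sigma S} (h : A.IsLaNFA)
    (hB : B ∈ A.comps) {q q' : S} {k : Kind} (hq : q ∈ B.Q) (hF : q ∉ B.F)
    (hT : B.T q = .sub k A' q') : k = .pla :=
  h k <| List.mem_flatMap.2
    ⟨B, hB, List.mem_filterMap.2 ⟨q, List.mem_filter.2 ⟨hq, by simpa using hF⟩, by simp [hT]⟩⟩

/-! ## Truthful results and tables -/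

theorem LAMatchRun.result_unique {w : List Sigma} {B : SubNFA Sigma S} {q : S} {i : ℕ}
    {r r' : Result} {s s' : List (LaRunElem S)} (h : LAMatchRun w B q i r s)
    (h' : LAMatchRun w B q i r' s') : r = r' := by
  induction h generalizing r' s' <;> cases h' <;> grind

/-- `r.Abstracts r'`: the result `r` of `Memo-la` is a correct description of the result `r'` of
`Match-(la,at)`, where the bare value `Success` leaves the end position open. -/
inductive LaResult.Abstracts : LaResult → Result → Prop
  | successAt (i : ℕ) : Abstracts (.successAt i) (.successAt i)
  | success (i : ℕ) : Abstracts .success (.successAt i)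
  | failure : Abstracts .failure .failure

namespace LaResult.Abstracts

variable {r : LaResult} {r' : Result}

theorem eq_failure_iff (h : r.Abstracts r') : r = .failure ↔ r' = .failure := by
  cases h <;> simp

theorem exists_eq_successAt (h : r.Abstracts r') (hr : r ≠ .failure) :
    ∃ i, r' = .successAt i := by
  cases h <;> simp_all

theorem eq_toLa (h : r.Abstracts r') (hr : r ≠ .success) : r = r'.toLa := by
  cases h <;> simp_all [Result.toLa]

theorem of_laRecord [DecidableEq S] (h : r.Abstracts r') {M : S × ℕ → Option LaVal} {q : S}
    {i : ℕ} {v : LaVal} (hv : laRecord M q i r (q, i) = some v) : v.toResult.Abstracts r' := by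
  cases h <;> obtain rfl := by simpa [laRecord] using hv
  exacts [.success _, .success _, .failure]

end LaResult.Abstracts

theorem Result.toLa_abstracts_iff {r r' : Result} : r.toLa.Abstracts r' ↔ r = r' := by
  refine ⟨fun h => ?_, ?_⟩
  · cases r <;> cases h <;> rfl
  · rintro rfl
    cases r <;> constructor

theorem laRecord_of_ne [DecidableEq S] {M : S × ℕ → Option LaVal} {q : S} {i : ℕ}
    {r : LaResult} {p : S × ℕ} (h : p ≠ (q, i)) : laRecord M q i r p = M p :=
  if_neg h

/-- The result `r` of `Memo-la` is truthful for the call `(q, i)` in `B`: `Match-(la,at)`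
terminates there with a result that `r` describes. -/
def Truthful (w : List Sigma) (B : SubNFA Sigma S) (q : S) (i : ℕ) (r : LaResult) : Prop :=
  ∃ r' s, r.Abstracts r' ∧ LAMatchRun w B q i r' s

theorem truthful_toLa_iff {w : List Sigma} {B : SubNFA Sigma S} {q : S} {i : ℕ} {r : Result} :
    Truthful w B q i r.toLa ↔ ∃ s, LAMatchRun w B q i r s := by
  simp [Truthful, Result.toLa_abstracts_iff]

theorem Truthful.abstracts {w : List Sigma} {B : SubNFA Sigma S} {q : S} {i : ℕ} {r : LaResult}
    {r' : Result} {s : List (LaRunElem S)} (h : Truthful w B q i r)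
    (hm : LAMatchRun w B q i r' s) : r.Abstracts r' := by
  obtain ⟨r'', s', hr, hs⟩ := h
  rwa [hm.result_unique hs]

/-- Every entry of the table `M` at a state of a component of `A` is truthful for the call in
that component. -/
def TruthfulTable (w : List Sigma) (A : SubNFA Sigma S) (M : S × ℕ → Option LaVal) : Prop :=
  ∀ B ∈ A.comps, ∀ q ∈ B.Q, ∀ i v, M (q, i) = some v → Truthful w B q i v.toResult

theorem TruthfulTable.record [DecidableEq S] {w : List Sigma} {A B : SubNFA Sigma S}
    {M : S × ℕ → Option LaVal} {q : S} {i : ℕ} {r : LaResult} (hM : TruthfulTable w A M)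
    (hWF : A.WF) (hB : B ∈ A.comps) (hq : q ∈ B.Q) (hr : Truthful w B q i r) :
    TruthfulTable w A (laRecord M q i r) := by
  intro C hC p hp j v hv
  by_cases hkey : (p, j) = (q, i)
  · obtain ⟨rfl, rfl⟩ := Prod.mk.inj hkey
    obtain rfl := hWF.eq_of_mem_Q hB hC hq hp
    obtain ⟨r', s, hrr', hs⟩ := hr
    exact ⟨r', s, hrr'.of_laRecord hv, hs⟩
  · exact hM C hC p hp j v (by rwa [laRecord_of_ne hkey] at hv)

theorem MemoLaRun.truthful [DecidableEq S] {w : List Sigma} {A B : SubNFA Sigma S} {q : S} {i : ℕ}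
    {M M' : S × ℕ → Option LaVal} {r : LaResult} {s : List (LaRunElem S)}
    (h : MemoLaRun w B q i M M' r s) (hWF : A.WF) (hB : B ∈ A.comps) (hq : q ∈ B.Q)
    (hM : TruthfulTable w A M) : Truthful w B q i r ∧ TruthfulTable w A M' := by
  have record {B q i r M} (hB : B ∈ A.comps) (hq : q ∈ B.Q) (hM : TruthfulTable w A M)
      (hr : Truthful w B q i r) :
      Truthful w B q i r ∧ TruthfulTable w A (laRecord M q i r) :=
    ⟨hr, hM.record hWF hB hq hr⟩
  induction h with
  | memoHit hv => exact ⟨hM _ hB _ hq _ _ hv, hM⟩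
  | accept _ hF => exact record hB hq hM ⟨_, _, .successAt _, .accept hF⟩
  | eps _ hF hT _ ih =>
    obtain ⟨⟨r', s, hr, hs⟩, hM'⟩ := ih hB ((hWF.1 _ hB).mem_of_eps hq hF hT) hM
    exact record hB hq hM' ⟨r', _, hr, .eps hF hT hs⟩
  | branchNoFail _ hF hT _ hne ih =>
    obtain ⟨⟨r', s, hr, hs⟩, hM'⟩ := ih hB ((hWF.1 _ hB).mem_of_branch hq hF hT).1 hM
    obtain ⟨j, rfl⟩ := hr.exists_eq_successAt hne
    exact record hB hq hM' ⟨_, _, hr, .branchSucc hF hT hs⟩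
  | branchFail _ hF hT _ _ ih₁ ih₂ =>
    have hbranch := (hWF.1 _ hB).mem_of_branch hq hF hT
    obtain ⟨hfail, hM₁⟩ := ih₁ hB hbranch.1 hM
    obtain ⟨s₁, hs₁⟩ := truthful_toLa_iff (r := .failure).1 hfail
    obtain ⟨⟨r', s₂, hr, hs₂⟩, hM₂⟩ := ih₂ hB hbranch.2 hM₁
    exact record hB hq hM₂ ⟨r', _, hr, .branchFail hF hT hs₁ hs₂⟩
  | charSucc _ hF hT hw _ ih =>
    obtain ⟨⟨r', s, hr, hs⟩, hM'⟩ := ih hB ((hWF.1 _ hB).mem_of_char hq hF hT) hM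
    exact record hB hq hM' ⟨r', _, hr, .charSucc hF hT hw hs⟩
  | charFail _ hF hT hw => exact record hB hq hM ⟨_, _, .failure, .charFail hF hT hw⟩
  | plaSucc _ hF hT _ hne _ ih₁ ih₂ =>
    have hA' := SubNFA.mem_comps_of_sub hB hq hT
    obtain ⟨⟨r₁, s₁, hr₁, hs₁⟩, hM₁⟩ := ih₁ hA' (hWF.1 _ hA').1 hM
    obtain ⟨j, rfl⟩ := hr₁.exists_eq_successAt hne
    obtain ⟨⟨r', s₂, hr, hs₂⟩, hM₂⟩ := ih₂ hB ((hWF.1 _ hB).mem_of_sub hq hF hT) hM₁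
    exact record hB hq hM₂ ⟨r', _, hr, .plaSucc hF hT hs₁ hs₂⟩
  | plaFail _ hF hT _ ih =>
    have hA' := SubNFA.mem_comps_of_sub hB hq hT
    obtain ⟨hfail, hM'⟩ := ih hA' (hWF.1 _ hA').1 hM
    obtain ⟨s, hs⟩ := truthful_toLa_iff (r := .failure).1 hfail
    exact record hB hq hM' ⟨_, _, .failure, .plaFail hF hT hs⟩

/-! ## Absence of recorded successes -/

theorem MemoLaRun.apply_eq_of_notMem_allStates [DecidableEq S] {w : List Sigma}
    {B : SubNFA Sigma S} {q : S} {i : ℕ} {M M' : S × ℕ → Option LaVal} {r : LaResult}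
    {s : List (LaRunElem S)} (h : MemoLaRun w B q i M M' r s) (hWF : B.WF) (hq : q ∈ B.Q)
    {p : S} (hp : p ∉ B.allStates) (j : ℕ) : M' (p, j) = M (p, j) := by
  have record_apply {B : SubNFA Sigma S} {q i r M} (hq : q ∈ B.Q) (hp : p ∉ B.allStates) :
      laRecord M q i r (p, j) = M (p, j) :=
    laRecord_of_ne fun hkey => hp ((Prod.mk.inj hkey).1 ▸ SubNFA.mem_allStates_of_mem_Q hq)
  induction h with
  | memoHit => rfl
  | accept => exact record_apply hq hp
  | eps _ hF hT _ ih =>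
    rw [record_apply hq hp, ih hWF (hWF.localOK.mem_of_eps hq hF hT) hp]
  | branchNoFail _ hF hT _ _ ih =>
    rw [record_apply hq hp, ih hWF (hWF.localOK.mem_of_branch hq hF hT).1 hp]
  | branchFail _ hF hT _ _ ih₁ ih₂ =>
    have hbranch := hWF.localOK.mem_of_branch hq hF hT
    rw [record_apply hq hp, ih₂ hWF hbranch.2 hp, ih₁ hWF hbranch.1 hp]
  | charSucc _ hF hT _ _ ih =>
    rw [record_apply hq hp, ih hWF (hWF.localOK.mem_of_char hq hF hT) hp]
  | charFail => exact record_apply hq hp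
  | plaSucc _ hF hT _ _ _ ih₁ ih₂ =>
    have hWF' := hWF.of_sub hq hT
    have hp' := fun hmem => hp (SubNFA.allStates_subset_of_sub hq hT hmem)
    rw [record_apply hq hp, ih₂ hWF (hWF.localOK.mem_of_sub hq hF hT) hp,
      ih₁ hWF' hWF'.localOK.1 hp']
  | plaFail _ _ hT _ ih =>
    have hWF' := hWF.of_sub hq hT
    have hp' := fun hmem => hp (SubNFA.allStates_subset_of_sub hq hT hmem)
    rw [record_apply hq hp, ih hWF' hWF'.localOK.1 hp']

/-- The table `M` records no `Success` for a top-level state of `B`; states of proper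
sub-automata of `B` are not restricted. -/
def SuccessFree (B : SubNFA Sigma S) (M : S × ℕ → Option LaVal) : Prop :=
  ∀ q ∈ B.Q, ∀ i, M (q, i) ≠ some .success

theorem SuccessFree.record_failure [DecidableEq S] {B : SubNFA Sigma S}
    {M : S × ℕ → Option LaVal} (h : SuccessFree B M) (q : S) (i : ℕ) :
    SuccessFree B (laRecord M q i .failure) := by
  intro p hp j
  by_cases hkey : (p, j) = (q, i)
  · simp [laRecord, hkey]
  · rw [laRecord_of_ne hkey]
    exact h p hp j

theorem SuccessFree.of_sub_run [DecidableEq S] {w : List Sigma} {B A' : SubNFA Sigma S}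
    {q q' : S} {k : Kind} {i : ℕ} {M M' : S × ℕ → Option LaVal} {r : LaResult}
    {s : List (LaRunElem S)} (h : SuccessFree B M) (hWF : B.WF) (hq : q ∈ B.Q)
    (hT : B.T q = .sub k A' q') (hrun : MemoLaRun w A' A'.q0 i M M' r s) :
    SuccessFree B M' := by
  intro p hp j
  have hWF' := hWF.of_sub hq hT
  rw [hrun.apply_eq_of_notMem_allStates hWF' hWF'.localOK.1
    (hWF.notMem_allStates_of_sub hq hT hp)]
  exact h p hp j

theorem MemoLaRun.ne_success_and_successFree [DecidableEq S] {w : List Sigma}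
    {B : SubNFA Sigma S} {q : S} {i : ℕ} {M M' : S × ℕ → Option LaVal} {r : LaResult}
    {s : List (LaRunElem S)} (h : MemoLaRun w B q i M M' r s) (hWF : B.WF) (hq : q ∈ B.Q)
    (hM : SuccessFree B M) :
    r ≠ .success ∧ (r = .failure → SuccessFree B M') := by
  have record {B : SubNFA Sigma S} {q i r M}
      (h : r ≠ .success ∧ (r = .failure → SuccessFree B M)) :
      r ≠ .success ∧ (r = .failure → SuccessFree B (laRecord M q i r)) :=
    ⟨h.1, fun hr => hr ▸ (h.2 hr).record_failure q i⟩
  induction h with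
  | @memoHit _ q i M v hv =>
    cases v with
    | success => exact absurd hv (hM q hq i)
    | failure => exact ⟨nofun, fun _ => hM⟩
  | accept => exact ⟨nofun, nofun⟩
  | eps _ hF hT _ ih => exact record (ih hWF (hWF.localOK.mem_of_eps hq hF hT) hM)
  | branchNoFail _ hF hT _ _ ih =>
    exact record (ih hWF (hWF.localOK.mem_of_branch hq hF hT).1 hM)
  | branchFail _ hF hT _ _ ih₁ ih₂ =>
    have hbranch := hWF.localOK.mem_of_branch hq hF hT
    exact record (ih₂ hWF hbranch.2 ((ih₁ hWF hbranch.1 hM).2 rfl))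
  | charSucc _ hF hT _ _ ih => exact record (ih hWF (hWF.localOK.mem_of_char hq hF hT) hM)
  | charFail => exact record ⟨nofun, fun _ => hM⟩
  | plaSucc _ hF hT hrun _ _ _ ih =>
    exact record (ih hWF (hWF.localOK.mem_of_sub hq hF hT) (hM.of_sub_run hWF hq hT hrun))
  | plaFail _ _ hT hrun _ => exact record ⟨nofun, fun _ => hM.of_sub_run hWF hq hT hrun⟩

/-! ## Termination and correctness -/

theorem exists_memoLaRun_of_eq_none_imp [DecidableEq S] {w : List Sigma} {B : SubNFA Sigma S}
    {q : S} {i : ℕ} {M : S × ℕ → Option LaVal}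
    (h : M (q, i) = none → ∃ M' r s, MemoLaRun w B q i M M' r s) :
    ∃ M' r s, MemoLaRun w B q i M M' r s := by
  cases hv : M (q, i) with
  | none => exact h hv
  | some v => exact ⟨_, _, _, .memoHit hv⟩

theorem LAMatchRun.exists_memoLaRun [DecidableEq S] {w : List Sigma} {A B : SubNFA Sigma S}
    {q : S} {i : ℕ} {r : Result} {s : List (LaRunElem S)} (h : LAMatchRun w B q i r s)
    (hWF : A.WF) (hLa : A.IsLaNFA) (hB : B ∈ A.comps) (hq : q ∈ B.Q)
    {M : S × ℕ → Option LaVal} (hM : TruthfulTable w A M) :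
    ∃ M' r' s', MemoLaRun w B q i M M' r' s' := by
  induction h generalizing M <;> refine exists_memoLaRun_of_eq_none_imp fun hnone => ?_
  case accept hF => exact ⟨_, _, _, .accept hnone hF⟩
  case eps hF hT _ ih =>
    obtain ⟨_, _, _, hrun⟩ := ih hB ((hWF.1 _ hB).mem_of_eps hq hF hT) hM
    exact ⟨_, _, _, .eps hnone hF hT hrun⟩
  case branchSucc hF hT hmatch ih =>
    have hq' := ((hWF.1 _ hB).mem_of_branch hq hF hT).1
    obtain ⟨_, _, _, hrun⟩ := ih hB hq' hM
    have hfail := ((hrun.truthful hWF hB hq' hM).1.abstracts hmatch).eq_failure_iff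
    exact ⟨_, _, _, .branchNoFail hnone hF hT hrun (by simp [hfail])⟩
  case branchFail hF hT hmatch _ ih₁ ih₂ =>
    have hbranch := (hWF.1 _ hB).mem_of_branch hq hF hT
    obtain ⟨_, _, _, hrun₁⟩ := ih₁ hB hbranch.1 hM
    obtain ⟨hr₁, hM₁⟩ := hrun₁.truthful hWF hB hbranch.1 hM
    obtain rfl := (hr₁.abstracts hmatch).eq_failure_iff.2 rfl
    obtain ⟨_, _, _, hrun₂⟩ := ih₂ hB hbranch.2 hM₁
    exact ⟨_, _, _, .branchFail hnone hF hT hrun₁ hrun₂⟩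
  case charSucc hF hT hw _ ih =>
    obtain ⟨_, _, _, hrun⟩ := ih hB ((hWF.1 _ hB).mem_of_char hq hF hT) hM
    exact ⟨_, _, _, .charSucc hnone hF hT hw hrun⟩
  case charFail hF hT hw => exact ⟨_, _, _, .charFail hnone hF hT hw⟩
  case plaSucc hF hT hmatch _ ih₁ ih₂ =>
    have hA' := SubNFA.mem_comps_of_sub hB hq hT
    have hq0 := (hWF.1 _ hA').1
    obtain ⟨_, _, _, hrun₁⟩ := ih₁ hA' hq0 hM
    obtain ⟨hr₁, hM₁⟩ := hrun₁.truthful hWF hA' hq0 hM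
    have hfail := (hr₁.abstracts hmatch).eq_failure_iff
    obtain ⟨_, _, _, hrun₂⟩ := ih₂ hB ((hWF.1 _ hB).mem_of_sub hq hF hT) hM₁
    exact ⟨_, _, _, .plaSucc hnone hF hT hrun₁ (by simp [hfail]) hrun₂⟩
  case plaFail hF hT hmatch ih =>
    have hA' := SubNFA.mem_comps_of_sub hB hq hT
    have hq0 := (hWF.1 _ hA').1
    obtain ⟨_, _, _, hrun⟩ := ih hA' hq0 hM
    obtain rfl := ((hrun.truthful hWF hA' hq0 hM).1.abstracts hmatch).eq_failure_iff.2 rfl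
    exact ⟨_, _, _, .plaFail hnone hF hT hrun⟩
  case atSucc hF hT _ _ _ _ => exact absurd (hLa.eq_pla hB hq hF hT) (by decide)
  case atFail hF hT _ _ => exact absurd (hLa.eq_pla hB hq hF hT) (by decide)

theorem memoLa_correct_general [DecidableEq S] {A : SubNFA Sigma S} (hWF : A.WF)
    (hLa : A.IsLaNFA) {w : List Sigma} {M : S × ℕ → Option LaVal} (hM : TruthfulTable w A M)
    (hfree : SuccessFree A M) {q : S} (hq : q ∈ A.Q) (i : ℕ) (r : Result) :
    (∃ s, LAMatchRun w A q i r s) ↔ ∃ M' s, MemoLaRun w A q i M M' r.toLa s := by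
  have hA := A.self_mem_comps
  constructor
  · rintro ⟨s, hmatch⟩
    obtain ⟨M', r', s', hrun⟩ := hmatch.exists_memoLaRun hWF hLa hA hq hM
    have habs : r'.Abstracts r := (hrun.truthful hWF hA hq hM).1.abstracts hmatch
    obtain rfl : r' = r.toLa := habs.eq_toLa (hrun.ne_success_and_successFree hWF hq hfree).1
    exact ⟨M', s', hrun⟩
  · rintro ⟨M', s, hrun⟩
    exact truthful_toLa_iff.1 (hrun.truthful hWF hA hq hM).1

/-- **Theorem 4** (correctness of `Memo-la`): for every la-NFA `A`, every input string
`w`, and every position `i ∈ {0, …, |w|}`, the memoized algorithm returns the same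
result as the original backtracking algorithm:
`Match-(la,at)_{A,w}(q0, i) = Memo-la^{M0}_{A,w}(q0, i)`. -/
theorem memoLa_correct {Sigma S : Type} [DecidableEq S]
    (A : SubNFA Sigma S) (hWF : A.WF) (hLa : A.IsLaNFA) (hLoop : A.NoEpsLoops)
    (w : List Sigma) (i : ℕ) (hi : i ≤ w.length) :
    ∀ r : Result,
      (∃ s, LAMatchRun w A A.q0 i r s) ↔
        (∃ M' s, MemoLaRun w A A.q0 i (fun _ => none) M' r.toLa s) := by
  exact memoLa_correct_general hWF hLa (by simp [TruthfulTable]) (by simp [SuccessFree])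
    hWF.localOK.1 i

end RegexMemo
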